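/- Let U : ℝ^d → ℝ be three times continuously differentiable, coercive, with finitely many critical points, all nondegenerate. Let m′ and m″ be two distinct local minima of U and let z : [0,1] → ℝ^d be a continuous path with z(0) = m′, z(1) = m″, U(z(1/2)) = Θ(m′, m″), and U(z(t)) < U(z(1/2)) for all t ∈ [0,1] ∖ {1/2}. Then z(1/2) is a saddle point of U. -/

import Mathlib

/-!
Write `x₀ = z (1/2)`. If any two points of the sublevel set `{U < U x₀}` close to `x₀` could be
joined inside that set, then the piece of `z` around `t = 1/2` could be replaced by a path lying
strictly below `U x₀`. The maximum of `U` on the rerouted path is attained, so the communication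
height would be less than `U x₀` (`commHeight_lt_of_joinedIn`), a contradiction. So it suffices to
join nearby points of the sublevel set whenever `x₀` is not a saddle.

At a regular point, both points are translated along a descent direction into a ball on which
`U < U x₀` (`joinedIn_sublevel_of_regular`). At a nondegenerate critical point, let `N` be the
span of the eigenvectors of the Hessian with negative eigenvalue (`exists_negative_subspace`).
No Morse chart is needed. By continuity of the Hessian, near `x₀` the function `U` is strictly
concave along `N` and convex along `Nᗮ`. Hence `U (x₀ + n) < U x₀` for small nonzero `n ∈ N`, and
`U (x₀ + p) ≥ U x₀` for small `p ∈ Nᗮ`. If `U (x₀ + n + p) < U x₀`, then `n ≠ 0`, and convexity in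
`p` puts the whole segment from `x₀ + n + p` to `x₀ + n` in the sublevel set. It remains to connect
nonzero points of a ball in `N`, which is possible when `dim N ≥ 2`, while for `dim N = 0` there is
nothing to join (`joinedIn_sublevel_of_critical`). Only `dim N = 1` survives.
-/

/-- The Hessian matrix `∇²U(x)` of `U : ℝ^d → ℝ` at `x`, whose `(i, j)` entry is the second
derivative of `U` at `x` in the directions of the `i`-th and `j`-th coordinate vectors. -/
noncomputable def hessianMatrix {d : ℕ} (U : EuclideanSpace ℝ (Fin d) → ℝ)
    (x : EuclideanSpace ℝ (Fin d)) : Matrix (Fin d) (Fin d) ℝ :=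
  fun i j =>
    iteratedFDeriv ℝ 2 U x ![EuclideanSpace.single i (1 : ℝ), EuclideanSpace.single j (1 : ℝ)]

/-- A saddle point of `U`: a nondegenerate critical point whose Hessian has exactly one
negative eigenvalue (counted with multiplicity). -/
def IsSaddle {d : ℕ} (U : EuclideanSpace ℝ (Fin d) → ℝ)
    (σ : EuclideanSpace ℝ (Fin d)) : Prop :=
  gradient U σ = 0 ∧ IsUnit (hessianMatrix U σ) ∧
    ∃ h : (hessianMatrix U σ).IsHermitian,
      (Finset.univ.filter fun i => h.eigenvalues i < 0).card = 1

/-- The communication height `Θ(x, y)` between `x` and `y`: the infimum, over all continuous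
paths `z : [0, 1] → ℝ^d` with `z 0 = x` and `z 1 = y`, of `max_{t ∈ [0, 1]} U (z t)`. -/
noncomputable def commHeight {d : ℕ} (U : EuclideanSpace ℝ (Fin d) → ℝ)
    (x y : EuclideanSpace ℝ (Fin d)) : ℝ :=
  sInf {h : ℝ | ∃ z : ℝ → EuclideanSpace ℝ (Fin d),
    ContinuousOn z (Set.Icc 0 1) ∧ z 0 = x ∧ z 1 = y ∧
    h = sSup (U '' (z '' Set.Icc 0 1))}

/-! ### Restriction of `U` to a line -/

section PathMaximum

variable {E : Type*} [NormedAddCommGroup E] [InnerProductSpace ℝ E]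

lemma hasDerivAt_line {U : E → ℝ} (hU : ContDiff ℝ 2 U) (y w : E) (s : ℝ) :
    HasDerivAt (fun s : ℝ => U (y + s • w)) (fderiv ℝ U (y + s • w) w) s := by
  have h1 : HasDerivAt (fun s : ℝ => y + s • w) w s := by
    simpa using ((hasDerivAt_id s).smul_const w).const_add y
  exact ((hU.differentiable (by norm_num)).differentiableAt.hasFDerivAt).comp_hasDerivAt s h1

lemma hasDerivAt_line_deriv {U : E → ℝ} (hU : ContDiff ℝ 2 U) (y w : E) (s : ℝ) :
    HasDerivAt (fun s : ℝ => fderiv ℝ U (y + s • w) w)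
      (fderiv ℝ (fderiv ℝ U) (y + s • w) w w) s := by
  have h1 : HasDerivAt (fun s : ℝ => y + s • w) w s := by
    simpa using ((hasDerivAt_id s).smul_const w).const_add y
  have h2 : Differentiable ℝ (fderiv ℝ U) :=
    (hU.fderiv_right (m := 1) (by norm_num)).differentiable (by norm_num)
  have h3 := (h2.differentiableAt (x := y + s • w)).hasFDerivAt.comp_hasDerivAt s h1
  simpa using h3.clm_apply (hasDerivAt_const s w)

lemma convexOn_line {U : E → ℝ} (hU : ContDiff ℝ 2 U) (y w : E)
    (h : ∀ s ∈ Set.Icc (0 : ℝ) 1, 0 ≤ fderiv ℝ (fderiv ℝ U) (y + s • w) w w) :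
    ConvexOn ℝ (Set.Icc 0 1) (fun s : ℝ => U (y + s • w)) := by
  have hd : deriv (fun s : ℝ => U (y + s • w)) = fun s => fderiv ℝ U (y + s • w) w :=
    funext fun s => (hasDerivAt_line hU y w s).deriv
  refine convexOn_of_deriv2_nonneg' (convex_Icc 0 1)
    (fun s _ => (hasDerivAt_line hU y w s).differentiableAt.differentiableWithinAt) ?_ ?_
  · rw [hd]
    exact fun s _ => (hasDerivAt_line_deriv hU y w s).differentiableAt.differentiableWithinAt
  · intro s hs
    simp only [Function.iterate_succ, Function.iterate_zero, Function.comp, id]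
    rw [hd, (hasDerivAt_line_deriv hU y w s).deriv]
    exact h s hs

lemma strictConcaveOn_line {U : E → ℝ} (hU : ContDiff ℝ 2 U) (y w : E)
    (h : ∀ s ∈ Set.Icc (0 : ℝ) 1, fderiv ℝ (fderiv ℝ U) (y + s • w) w w < 0) :
    StrictConcaveOn ℝ (Set.Icc 0 1) (fun s : ℝ => U (y + s • w)) := by
  have hd : deriv (fun s : ℝ => U (y + s • w)) = fun s => fderiv ℝ U (y + s • w) w :=
    funext fun s => (hasDerivAt_line hU y w s).deriv
  refine strictConcaveOn_of_deriv2_neg' (convex_Icc 0 1)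
    (fun s _ => (hasDerivAt_line hU y w s).continuousAt.continuousWithinAt) ?_
  intro s hs
  simp only [Function.iterate_succ, Function.iterate_zero, Function.comp, id]
  rw [hd, (hasDerivAt_line_deriv hU y w s).deriv]
  exact h s hs

/-! ### Local joins inside the sublevel set -/

/-- In a real inner product space of dimension at least two, a punctured ball is path connected: the
homeomorphism of the space with the ball carries it from the complement of the origin. -/
lemma joinedIn_punctured_ball {F : Type*} [NormedAddCommGroup F] [InnerProductSpace ℝ F]
    (hF : 1 < Module.rank ℝ F) {r : ℝ} (hr : 0 < r) {a b : F} (ha : ‖a‖ < r) (ha0 : a ≠ 0)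
    (hb : ‖b‖ < r) (hb0 : b ≠ 0) : JoinedIn {x : F | ‖x‖ < r ∧ x ≠ 0} a b := by
  set f := OpenPartialHomeomorph.univBall (0 : F) r
  have hs : f.source = Set.univ := OpenPartialHomeomorph.univBall_source 0 r
  have ht : f.target = Metric.ball 0 r := OpenPartialHomeomorph.univBall_target 0 hr
  have h0 : f 0 = 0 := OpenPartialHomeomorph.univBall_apply_zero 0 r
  have hf0 : ∀ x, x ≠ 0 → f x ≠ 0 := fun x hx h =>
    hx (f.injOn (by simp [hs]) (by simp [hs]) (h.trans h0.symm))
  have hfa : f (f.symm a) = a := f.right_inv (by simpa [ht] using ha)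
  have hfb : f (f.symm b) = b := f.right_inv (by simpa [ht] using hb)
  have hne : ∀ x, x ≠ 0 → f (f.symm x) = x → f.symm x ≠ 0 := fun x hx h h' =>
    hx (by rw [← h, h', h0])
  have h1 := (isPathConnected_compl_singleton_of_one_lt_rank hF (0 : F)).joinedIn
    (f.symm a) (hne a ha0 hfa) (f.symm b) (hne b hb0 hfb)
  have h2 := h1.map (OpenPartialHomeomorph.continuous_univBall (0 : F) r)
  change JoinedIn (f '' _) (f _) (f _) at h2
  rw [hfa, hfb] at h2
  refine h2.mono ?_
  rintro _ ⟨x, hx, rfl⟩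
  refine ⟨?_, hf0 x hx⟩
  have := f.map_source (x := x) (by simp [hs])
  simpa [ht] using this

/-- Near a regular point `x₀`, any two points of the sublevel set `{U < U x₀}` can be joined inside
it: translate both along a descent direction into a ball on which `U < U x₀`. -/
lemma joinedIn_sublevel_of_regular [CompleteSpace E] {U : E → ℝ} (hU : ContDiff ℝ 2 U) {x₀ : E}
    (hreg : fderiv ℝ U x₀ ≠ 0) :
    ∃ δ > 0, ∀ a ∈ Metric.ball x₀ δ, ∀ b ∈ Metric.ball x₀ δ, U a < U x₀ → U b < U x₀ →
      JoinedIn {x | U x < U x₀} a b := by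
  obtain ⟨v, hv⟩ : ∃ v, fderiv ℝ U x₀ v < 0 := by
    obtain ⟨v, hv⟩ : ∃ v, fderiv ℝ U x₀ v ≠ 0 := by
      by_contra! h
      exact hreg (ContinuousLinearMap.ext (by simpa using h))
    rcases lt_or_gt_of_ne hv with h | h
    · exact ⟨v, h⟩
    · exact ⟨-v, by simpa using h⟩
  have hcont : Continuous fun x => fderiv ℝ U x v :=
    (hU.continuous_fderiv (by norm_num)).clm_apply continuous_const
  obtain ⟨r, hr, hball⟩ := Metric.eventually_nhds_iff.1
    (hcont.continuousAt.eventually_lt (continuousAt_const (y := (0 : ℝ))) hv)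
  have hanti : ∀ y τ : ℝ, ∀ x : E, 0 < τ → dist x x₀ + τ * ‖v‖ < r → y ∈ Set.Icc 0 τ →
      U (x + y • v) ≤ U x ∧ (y ≠ 0 → U (x + y • v) < U x) := by
    intro y τ x hτ hx hy
    have h1 : StrictAntiOn (fun s : ℝ => U (x + s • v)) (Set.Icc 0 τ) := by
      refine strictAntiOn_of_deriv_neg (convex_Icc 0 τ)
        (fun s _ => (hasDerivAt_line hU x v s).continuousAt.continuousWithinAt) ?_
      intro s hs
      rw [interior_Icc] at hs
      rw [(hasDerivAt_line hU x v s).deriv]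
      apply hball
      calc dist (x + s • v) x₀ ≤ dist (x + s • v) x + dist x x₀ := dist_triangle _ _ _
        _ = s * ‖v‖ + dist x x₀ := by
          rw [dist_self_add_left, norm_smul, Real.norm_of_nonneg hs.1.le]
        _ ≤ τ * ‖v‖ + dist x x₀ := by gcongr; exact hs.2.le
        _ < r := by linarith
    have h0 : (0 : ℝ) ∈ Set.Icc 0 τ := ⟨le_rfl, hτ.le⟩
    constructor
    · simpa using h1.antitoneOn h0 hy hy.1
    · intro hy0
      simpa using h1 h0 hy (lt_of_le_of_ne hy.1 (Ne.symm hy0))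
  obtain ⟨τ, hτ, hτr⟩ : ∃ τ : ℝ, 0 < τ ∧ τ * ‖v‖ < r / 2 := by
    refine ⟨r / 2 / (‖v‖ + 1), by positivity, ?_⟩
    rw [div_mul_eq_mul_div, div_lt_iff₀ (by positivity)]
    nlinarith [norm_nonneg v]
  have hlow : U (x₀ + τ • v) < U x₀ :=
    (hanti τ τ x₀ hτ (by simp; linarith) ⟨hτ.le, le_rfl⟩).2 hτ.ne'
  obtain ⟨δ, hδ, hδball⟩ := Metric.eventually_nhds_iff.1
    (hU.continuous.continuousAt.eventually_lt (continuousAt_const (y := U x₀)) hlow)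
  refine ⟨min δ (r / 2), by positivity, fun a ha b hb hUa hUb => ?_⟩
  have hdown : ∀ x ∈ Metric.ball x₀ (min δ (r / 2)), U x < U x₀ →
      JoinedIn {x | U x < U x₀} x (x + τ • v) := by
    intro x hx hUx
    apply JoinedIn.of_segment_subset
    rw [segment_eq_image']
    rintro _ ⟨θ, hθ, rfl⟩
    have hx' : dist x x₀ < r / 2 := lt_of_lt_of_le hx (min_le_right _ _)
    have := (hanti (θ * τ) τ x hτ (by linarith)
      ⟨mul_nonneg hθ.1 hτ.le, mul_le_of_le_one_left hτ.le hθ.2⟩).1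
    simp only [add_sub_cancel_left, Set.mem_ofPred_eq, smul_smul]
    linarith
  refine (hdown a ha hUa).trans (JoinedIn.trans ?_ (hdown b hb hUb).symm)
  apply JoinedIn.of_segment_subset
  have hmem : ∀ x ∈ Metric.ball x₀ (min δ (r / 2)),
      x + τ • v ∈ Metric.ball (x₀ + τ • v) δ := by
    intro x hx
    rw [Metric.mem_ball, dist_add_right]
    exact lt_of_lt_of_le hx (min_le_left _ _)
  exact ((convex_ball _ _).segment_subset (hmem a ha) (hmem b hb)).trans fun x hx => hδball hx

/-- Let `x₀` be a critical point whose Hessian is negative definite on `N` and positive definite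
on `Nᗮ`. If `dim N ≠ 1`, then any two points of `{U < U x₀}` near `x₀` can be joined inside this
sublevel set: `U` is convex along the fibres of the projection to `x₀ + N`, so a point can be moved
to its projection, and the projections are joined inside a punctured ball of `N`. When `N = 0` the
point `x₀` is a local minimum and there is nothing to join. -/
lemma joinedIn_sublevel_of_critical [FiniteDimensional ℝ E] {U : E → ℝ} (hU : ContDiff ℝ 2 U)
    {x₀ : E} (hcrit : fderiv ℝ U x₀ = 0) (N : Submodule ℝ E) (hN : Module.finrank ℝ N ≠ 1)
    {c : ℝ} (hc : 0 < c)
    (hneg : ∀ n ∈ N, fderiv ℝ (fderiv ℝ U) x₀ n n ≤ -c * ‖n‖ ^ 2)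
    (hpos : ∀ p ∈ Nᗮ, c * ‖p‖ ^ 2 ≤ fderiv ℝ (fderiv ℝ U) x₀ p p) :
    ∃ δ > 0, ∀ a ∈ Metric.ball x₀ δ, ∀ b ∈ Metric.ball x₀ δ, U a < U x₀ → U b < U x₀ →
      JoinedIn {x | U x < U x₀} a b := by
  have hcont : Continuous (fderiv ℝ (fderiv ℝ U)) :=
    (hU.fderiv_right (m := 1) (by norm_num)).continuous_fderiv (by norm_num)
  obtain ⟨r, hr, hball⟩ : ∃ r > 0, ∀ x, dist x x₀ < r →
      ‖fderiv ℝ (fderiv ℝ U) x - fderiv ℝ (fderiv ℝ U) x₀‖ < c := by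
    have h : Continuous fun x => ‖fderiv ℝ (fderiv ℝ U) x - fderiv ℝ (fderiv ℝ U) x₀‖ :=
      (continuous_norm (E := E →L[ℝ] E →L[ℝ] ℝ)).comp (hcont.sub continuous_const)
    exact Metric.eventually_nhds_iff.1
      (h.continuousAt.eventually_lt (continuousAt_const (y := c))
        (by rw [sub_self]; exact (norm_zero (E := E →L[ℝ] E →L[ℝ] ℝ)).trans_lt hc))
  have hclose : ∀ x, dist x x₀ < r → ∀ w,
      |fderiv ℝ (fderiv ℝ U) x w w - fderiv ℝ (fderiv ℝ U) x₀ w w| ≤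
        ‖fderiv ℝ (fderiv ℝ U) x - fderiv ℝ (fderiv ℝ U) x₀‖ * ‖w‖ ^ 2 := by
    intro x hx w
    have := (fderiv ℝ (fderiv ℝ U) x - fderiv ℝ (fderiv ℝ U) x₀).le_opNorm₂ w w
    simpa [pow_two, mul_assoc] using this
  -- On the ball of radius `r` the Hessian keeps its sign on `N` and on `Nᗮ`.
  have hneg' : ∀ x, dist x x₀ < r → ∀ n ∈ N, n ≠ 0 → fderiv ℝ (fderiv ℝ U) x n n < 0 := by
    intro x hx n hn hn0
    have h1 := (abs_le.1 (hclose x hx n)).2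
    have h2 := hneg n hn
    have h3 : ‖fderiv ℝ (fderiv ℝ U) x - fderiv ℝ (fderiv ℝ U) x₀‖ * ‖n‖ ^ 2
        < c * ‖n‖ ^ 2 := by
      have : 0 < ‖n‖ := norm_pos_iff.2 hn0
      have := hball x hx
      gcongr
    linarith
  have hpos' : ∀ x, dist x x₀ < r → ∀ p ∈ Nᗮ, 0 ≤ fderiv ℝ (fderiv ℝ U) x p p := by
    intro x hx p hp
    have h1 := (abs_le.1 (hclose x hx p)).1
    have h2 := hpos p hp
    have h3 : ‖fderiv ℝ (fderiv ℝ U) x - fderiv ℝ (fderiv ℝ U) x₀‖ * ‖p‖ ^ 2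
        ≤ c * ‖p‖ ^ 2 := by
      have := hball x hx
      gcongr
    linarith
  have h0 : (0 : ℝ) ∈ Set.Icc (0 : ℝ) 1 := by simp
  have h1 : (1 : ℝ) ∈ Set.Icc (0 : ℝ) 1 := by simp
  have hlow : ∀ n ∈ N, n ≠ 0 → ‖n‖ < r → U (x₀ + n) < U x₀ := by
    intro n hn hn0 hnr
    have hconc := strictConcaveOn_line hU x₀ n fun s hs => by
      refine hneg' _ ?_ n hn hn0
      rw [dist_self_add_left, norm_smul, Real.norm_of_nonneg hs.1]
      exact (mul_le_of_le_one_left (norm_nonneg n) hs.2).trans_lt hnr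
    have := hconc.slope_lt_of_hasDerivAt h0 h1 zero_lt_one (hasDerivAt_line hU x₀ n 0)
    simpa [slope_def_field, hcrit] using this
  have hhigh : ∀ p ∈ Nᗮ, ‖p‖ < r → U x₀ ≤ U (x₀ + p) := by
    intro p hp hpr
    have hconv := convexOn_line hU x₀ p fun s hs => by
      refine hpos' _ ?_ p hp
      rw [dist_self_add_left, norm_smul, Real.norm_of_nonneg hs.1]
      exact (mul_le_of_le_one_left (norm_nonneg p) hs.2).trans_lt hpr
    have := hconv.le_slope_of_hasDerivAt h0 h1 zero_lt_one (hasDerivAt_line hU x₀ p 0)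
    simpa [slope_def_field, hcrit] using this
  have key : ∀ a ∈ Metric.ball x₀ r, U a < U x₀ → ∃ n : N, n ≠ 0 ∧ ‖n‖ < r ∧
      JoinedIn {x | U x < U x₀} a (x₀ + n) := by
    intro a ha hUa
    set n : N := N.orthogonalProjectionOnto (a - x₀) with hn
    set p : E := a - x₀ - n with hp
    have hpN : p ∈ Nᗮ := N.sub_starProjection_mem_orthogonal (a - x₀)
    have har : ‖a - x₀‖ < r := by rwa [← dist_eq_norm]
    have hnr : ‖n‖ < r := (N.norm_orthogonalProjectionOnto_apply_le (a - x₀)).trans_lt har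
    have hap : a = x₀ + n + p := by rw [hp]; abel
    -- If `n = 0`, then `a` lies in `x₀ + Nᗮ`, where `x₀` minimizes `U` locally.
    have hn0 : n ≠ 0 := by
      intro h
      have hp' : p = a - x₀ := by rw [hp, h]; simp
      have := hhigh p hpN (by rwa [hp'])
      rw [hp', add_sub_cancel] at this
      linarith
    refine ⟨n, hn0, hnr, JoinedIn.symm (JoinedIn.of_segment_subset ?_)⟩
    have hUn : U (x₀ + n) < U x₀ := hlow n n.2 (by simpa using hn0) (by simpa using hnr)
    have hmem : ∀ s ∈ Set.Icc (0 : ℝ) 1, x₀ + n + s • p ∈ Metric.ball x₀ r := by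
      intro s hs
      refine (convex_ball x₀ r).segment_subset (x := x₀ + n) (y := a) (by simpa using hnr) ha ?_
      rw [segment_eq_image']
      refine ⟨s, hs, ?_⟩
      simp only
      rw [show a - (x₀ + n) = p by rw [hp]; abel]
    have hconv := convexOn_line hU (x₀ + n) p fun s hs => hpos' _ (hmem s hs) p hpN
    rw [segment_eq_image']
    rintro _ ⟨s, hs, rfl⟩
    have h2 := hconv.le_max_of_mem_Icc h0 h1 hs
    simp only [zero_smul, add_zero, one_smul, ← hap] at h2
    rw [show a - (x₀ + n) = p by rw [hp]; abel]
    exact h2.trans_lt (max_lt hUn hUa)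
  refine ⟨r, hr, fun a ha b hb hUa hUb => ?_⟩
  obtain ⟨n₁, hn₁, hn₁r, hj₁⟩ := key a ha hUa
  obtain ⟨n₂, hn₂, hn₂r, hj₂⟩ := key b hb hUb
  have hrank : 1 < Module.rank ℝ N := by
    have : Nontrivial N := ⟨n₁, 0, hn₁⟩
    have h3 : 0 < Module.finrank ℝ N := Module.finrank_pos
    rw [← Module.finrank_eq_rank]
    exact_mod_cast (by omega : 1 < Module.finrank ℝ N)
  refine hj₁.trans (JoinedIn.trans ?_ hj₂.symm)
  have h4 := (joinedIn_punctured_ball hrank hr hn₁r hn₁ hn₂r hn₂).map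
    (f := fun n : N => x₀ + (n : E)) (by fun_prop)
  refine h4.mono ?_
  rintro _ ⟨n, ⟨hnr, hn0⟩, rfl⟩
  exact hlow n n.2 (by simpa using hn0) (by simpa using hnr)

end PathMaximum

/-! ### The Hessian matrix and its negative eigenspace -/

lemma hessianMatrix_apply {d : ℕ} (U : EuclideanSpace ℝ (Fin d) → ℝ)
    (x : EuclideanSpace ℝ (Fin d)) (i j : Fin d) :
    hessianMatrix U x i j = fderiv ℝ (fderiv ℝ U) x (EuclideanSpace.single i 1)
      (EuclideanSpace.single j 1) := by
  simp [hessianMatrix, iteratedFDeriv_two_apply]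

lemma hessianMatrix_isHermitian {d : ℕ} {U : EuclideanSpace ℝ (Fin d) → ℝ}
    (hU : ContDiff ℝ 2 U) (x : EuclideanSpace ℝ (Fin d)) : (hessianMatrix U x).IsHermitian := by
  ext i j
  have h := (hU.contDiffAt (x := x)).isSymmSndFDerivAt (by simp)
  simp only [Matrix.conjTranspose_apply, star_trivial, hessianMatrix_apply]
  exact h _ _

lemma gradient_eq_zero_iff {d : ℕ} (U : EuclideanSpace ℝ (Fin d) → ℝ)
    (x : EuclideanSpace ℝ (Fin d)) : gradient U x = 0 ↔ fderiv ℝ U x = 0 := by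
  simp [gradient]

/-- The Hessian quadratic form is diagonal in the eigenbasis of the Hessian matrix. -/
lemma hessian_quadratic_eq {d : ℕ} (U : EuclideanSpace ℝ (Fin d) → ℝ)
    (x w : EuclideanSpace ℝ (Fin d)) (h : (hessianMatrix U x).IsHermitian) :
    fderiv ℝ (fderiv ℝ U) x w w =
      ∑ i, h.eigenvalues i * inner ℝ (h.eigenvectorBasis i) w ^ 2 := by
  set B := fderiv ℝ (fderiv ℝ U) x with hB
  have hexp : ∀ y : EuclideanSpace ℝ (Fin d), y = ∑ i, y i • EuclideanSpace.single i (1 : ℝ) := by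
    intro y
    simpa using ((EuclideanSpace.basisFun (Fin d) ℝ).sum_repr y).symm
  have hev : ∀ j, B w (h.eigenvectorBasis j) =
      h.eigenvalues j * inner ℝ (h.eigenvectorBasis j) w := by
    intro j
    set v := h.eigenvectorBasis j with hv
    have hmul : ∀ i, ∑ k, hessianMatrix U x i k * v k = h.eigenvalues j * v i := by
      intro i
      have := congrFun (h.mulVec_eigenvectorBasis j) i
      simpa [Matrix.mulVec, dotProduct] using this
    have hBv : ∀ i, B (EuclideanSpace.single i 1) v = h.eigenvalues j * v i := by
      intro i
      rw [← hmul i]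
      conv_lhs => rw [hexp v]
      rw [map_sum]
      refine Finset.sum_congr rfl fun k _ => ?_
      rw [map_smul, hessianMatrix_apply, smul_eq_mul, mul_comm]
    conv_lhs => rw [hexp w]
    rw [map_sum, sum_apply]
    simp only [map_smul, smul_apply, hBv, PiLp.inner_apply, Finset.mul_sum]
    refine Finset.sum_congr rfl fun k _ => ?_
    simp
    ring
  conv_lhs => rw [← h.eigenvectorBasis.sum_repr' w, map_sum]
  rw [h.eigenvectorBasis.sum_repr' w]
  refine Finset.sum_congr rfl fun k _ => ?_
  rw [map_smul, hev, smul_eq_mul]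
  ring

/-- The negative eigenvectors of a nondegenerate Hessian span a subspace on which the Hessian is
negative definite, while it is positive definite on the orthogonal complement, both with a common
constant `c`. The dimension of the span is the number of negative eigenvalues. -/
lemma exists_negative_subspace {d : ℕ} (U : EuclideanSpace ℝ (Fin d) → ℝ)
    (x : EuclideanSpace ℝ (Fin d)) (h : (hessianMatrix U x).IsHermitian)
    (hunit : IsUnit (hessianMatrix U x)) :
    ∃ N : Submodule ℝ (EuclideanSpace ℝ (Fin d)), ∃ c > 0,
      Module.finrank ℝ N = (Finset.univ.filter fun i => h.eigenvalues i < 0).card ∧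
      (∀ n ∈ N, fderiv ℝ (fderiv ℝ U) x n n ≤ -c * ‖n‖ ^ 2) ∧
      (∀ p ∈ Nᗮ, c * ‖p‖ ^ 2 ≤ fderiv ℝ (fderiv ℝ U) x p p) := by
  have hne : ∀ i, h.eigenvalues i ≠ 0 := by
    have hdet := ((Matrix.isUnit_iff_isUnit_det _).1 hunit).ne_zero
    rw [h.det_eq_prod_eigenvalues] at hdet
    intro i
    simpa using Finset.prod_ne_zero_iff.1 hdet i (Finset.mem_univ i)
  -- The constant is a lower bound for `|λᵢ|`, written as an inverse so that `d = 0` is covered.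
  obtain ⟨c, hc, hcle⟩ : ∃ c > 0, ∀ i, c ≤ |h.eigenvalues i| := by
    obtain ⟨M, hM⟩ := (Set.finite_range fun i => |h.eigenvalues i|⁻¹).bddAbove
    refine ⟨(max M 1)⁻¹, by positivity, fun i => ?_⟩
    have : |h.eigenvalues i|⁻¹ ≤ max M 1 := (hM ⟨i, rfl⟩).trans (le_max_left _ _)
    exact inv_le_of_inv_le₀ (abs_pos.2 (hne i)) this
  set v := h.eigenvectorBasis
  let f : {i // h.eigenvalues i < 0} → EuclideanSpace ℝ (Fin d) := fun i => v i
  refine ⟨Submodule.span ℝ (Set.range f), c, hc, ?_, ?_, ?_⟩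
  · have hli : LinearIndependent ℝ f :=
      v.orthonormal.linearIndependent.comp _ Subtype.val_injective
    rw [finrank_span_eq_card hli, Fintype.card_subtype]
  · intro n hn
    have hz : ∀ i, ¬ h.eigenvalues i < 0 → inner ℝ (v i) n = 0 := by
      intro i hi
      have hle : Submodule.span ℝ (Set.range f) ≤ (Submodule.span ℝ {v i})ᗮ := by
        rw [Submodule.span_le]
        rintro _ ⟨k, rfl⟩
        rw [SetLike.mem_coe, Submodule.mem_orthogonal_singleton_iff_inner_right]
        exact v.orthonormal.2 fun hik => hi (hik ▸ k.2)
      exact Submodule.mem_orthogonal_singleton_iff_inner_right.1 (hle hn)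
    rw [hessian_quadratic_eq U x n h, ← v.sum_sq_inner_right n, Finset.mul_sum]
    refine Finset.sum_le_sum fun i _ => ?_
    by_cases hi : h.eigenvalues i < 0
    · have := hcle i
      rw [abs_of_neg hi] at this
      exact mul_le_mul_of_nonneg_right (by linarith) (sq_nonneg _)
    · change _ * inner ℝ (v i) n ^ 2 ≤ _
      simp [hz i hi]
  · intro p hp
    have hz : ∀ i, h.eigenvalues i < 0 → inner ℝ (v i) p = 0 := fun i hi =>
      (Submodule.mem_orthogonal _ _).1 hp _ (Submodule.subset_span ⟨⟨i, hi⟩, rfl⟩)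
    rw [hessian_quadratic_eq U x p h, ← v.sum_sq_inner_right p, Finset.mul_sum]
    refine Finset.sum_le_sum fun i _ => ?_
    by_cases hi : h.eigenvalues i < 0
    · change _ ≤ _ * inner ℝ (v i) p ^ 2
      simp [hz i hi]
    · have := hcle i
      rw [abs_of_nonneg (not_lt.1 hi)] at this
      exact mul_le_mul_of_nonneg_right this (sq_nonneg _)

/-! ### Rerouting the path -/

/-- On a path inside the sublevel set `{U < h}` the maximum of `U` is attained, so the path
witnesses a communication height strictly below `h`. -/
lemma commHeight_lt_of_joinedIn {d : ℕ} {U : EuclideanSpace ℝ (Fin d) → ℝ} (hU : Continuous U)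
    {x y : EuclideanSpace ℝ (Fin d)} {h : ℝ} (hxy : JoinedIn {x | U x < h} x y) :
    commHeight U x y < h := by
  have hcpt : ∀ z : ℝ → EuclideanSpace ℝ (Fin d), ContinuousOn z (Set.Icc 0 1) →
      IsCompact (U '' (z '' Set.Icc 0 1)) := fun z hz =>
    (isCompact_Icc.image_of_continuousOn hz).image hU
  let γ := hxy.somePath
  have hγ : ContinuousOn (γ.extend : ℝ → _) (Set.Icc 0 1) := γ.continuous_extend.continuousOn
  have hmem : sSup (U '' (γ.extend '' Set.Icc 0 1)) ∈ U '' (γ.extend '' Set.Icc 0 1) :=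
    (hcpt _ hγ).sSup_mem (((Set.nonempty_Icc.2 zero_le_one).image _).image _)
  have hlt : sSup (U '' (γ.extend '' Set.Icc 0 1)) < h := by
    obtain ⟨_, ⟨t, ht, rfl⟩, heq⟩ := hmem
    rw [← heq, Path.extend_apply γ ht]
    exact hxy.somePath_mem ⟨t, ht⟩
  refine lt_of_le_of_lt (csInf_le ⟨U x, ?_⟩ ⟨γ.extend, hγ, by simp, by simp, rfl⟩) hlt
  rintro _ ⟨w, hw, rfl, -, rfl⟩
  exact le_csSup (hcpt w hw).bddAbove ⟨_, ⟨0, by simp, rfl⟩, rfl⟩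

/-- Let `U : ℝ^d → ℝ` be `C³`, coercive, with finitely many critical points,
all nondegenerate.  Let `m', m''` be distinct local minima and let `z` be a continuous path
from `m'` to `m''` attaining the communication height exactly at `t = 1/2`.  Then `z (1/2)` is
a saddle point of `U`. -/
theorem path_maximum_is_saddle
    (d : ℕ) (hd : 1 ≤ d) (U : EuclideanSpace ℝ (Fin d) → ℝ)
    (hU : ContDiff ℝ 3 U)
    (hcoer : Filter.Tendsto U (Filter.cocompact (EuclideanSpace ℝ (Fin d))) Filter.atTop)
    (hfin : {x | gradient U x = 0}.Finite)
    (hnd : ∀ x, gradient U x = 0 → IsUnit (hessianMatrix U x))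
    (m' m'' : EuclideanSpace ℝ (Fin d))
    (hm' : IsLocalMin U m') (hm'' : IsLocalMin U m'') (hne : m' ≠ m'')
    (z : ℝ → EuclideanSpace ℝ (Fin d))
    (hz : ContinuousOn z (Set.Icc 0 1))
    (hz0 : z 0 = m') (hz1 : z 1 = m'')
    (hzmax : U (z (1 / 2)) = commHeight U m' m'')
    (hzlt : ∀ t ∈ Set.Icc (0 : ℝ) 1, t ≠ 1 / 2 → U (z t) < U (z (1 / 2))) :
    IsSaddle U (z (1 / 2)) := by
  have hU2 : ContDiff ℝ 2 U := hU.of_le (by norm_num)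
  set x₀ := z (1 / 2) with hx₀
  -- If nearby points of the sublevel set could always be joined inside it, the path could be
  -- rerouted strictly below `U x₀`.
  have hreroute : ¬ ∃ δ > 0, ∀ a ∈ Metric.ball x₀ δ, ∀ b ∈ Metric.ball x₀ δ,
      U a < U x₀ → U b < U x₀ → JoinedIn {x | U x < U x₀} a b := by
    rintro ⟨δ, hδ, hj⟩
    obtain ⟨η, hη, hclose⟩ := Metric.continuousWithinAt_iff.1
      (hz (1 / 2) (by norm_num)) δ hδ
    set ε := min (η / 2) (1 / 4) with hε
    have hε0 : 0 < ε := by positivity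
    have hε1 : ε ≤ 1 / 4 := min_le_right _ _
    have hεη : ε < η := (min_le_left _ _).trans_lt (by linarith)
    have hmid : JoinedIn {x | U x < U x₀} (z (1 / 2 - ε)) (z (1 / 2 + ε)) := by
      have hm : 1 / 2 - ε ∈ Set.Icc (0 : ℝ) 1 := ⟨by linarith, by linarith⟩
      have hp : 1 / 2 + ε ∈ Set.Icc (0 : ℝ) 1 := ⟨by linarith, by linarith⟩
      refine hj _ (hclose hm ?_) _ (hclose hp ?_) (hzlt _ hm (by linarith))
        (hzlt _ hp (by linarith))
      · simpa [Real.dist_eq, abs_of_pos hε0] using hεη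
      · simpa [Real.dist_eq, abs_of_pos hε0] using hεη
    have hpiece : ∀ s t : ℝ, s ≤ t → Set.Icc s t ⊆ Set.Icc 0 1 → 1 / 2 ∉ Set.Icc s t →
        JoinedIn {x | U x < U x₀} (z s) (z t) := by
      intro s t hst hsub hnot
      have h1 : JoinedIn (Set.Icc s t) s t :=
        JoinedIn.of_segment_subset (by rw [segment_eq_Icc hst])
      refine (h1.map_continuousOn (hz.mono hsub)).mono ?_
      rintro _ ⟨u, hu, rfl⟩
      exact hzlt u (hsub hu) fun h => hnot (h ▸ hu)
    have hfull := ((hpiece 0 (1 / 2 - ε) (by linarith)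
        (Set.Icc_subset_Icc le_rfl (by linarith)) (fun h => by linarith [h.2])).trans hmid).trans
      (hpiece (1 / 2 + ε) 1 (by linarith)
        (Set.Icc_subset_Icc (by linarith) le_rfl) (fun h => by linarith [h.1]))
    rw [hz0, hz1] at hfull
    exact (commHeight_lt_of_joinedIn hU.continuous hfull).ne hzmax.symm
  have hcrit : fderiv ℝ U x₀ = 0 := by
    by_contra hreg
    exact hreroute (joinedIn_sublevel_of_regular hU2 hreg)
  have hgrad : gradient U x₀ = 0 := (gradient_eq_zero_iff U x₀).2 hcrit
  have hH := hessianMatrix_isHermitian hU2 x₀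
  refine ⟨hgrad, hnd x₀ hgrad, hH, ?_⟩
  by_contra hcard
  obtain ⟨N, c, hc, hrank, hneg, hpos⟩ := exists_negative_subspace U x₀ hH (hnd x₀ hgrad)
  exact hreroute
    (joinedIn_sublevel_of_critical hU2 hcrit N (by rwa [hrank]) hc hneg hpos)
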